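/- For n ≥ 2, the quantity n! Σ_{k=0}^{n−2} n^k/k! equals (n−1)! Σ_{k=0}^{n−2} n^(k+1)/k!·(1/n)·n = n · (n−1)! Σ_{k=0}^{n−2} n^k/k!; in particular a(n) := (n−1)! Σ_{k=0}^{n−2} n^k/k! satisfies n·a(n) = Σ_T TotalHeight(T), the total of all heights over rooted labeled trees on n vertices, so a(2)=1, a(3)=8, a(4)=78, a(5)=944. -/

import Mathlib

/-- The type of rooted labeled trees on `n` vertices: a tree on `Fin n` with a root. -/
def RootedLabeledTree (n : ℕ) : Type :=
  {p : SimpleGraph (Fin n) × Fin n // p.1.IsTree}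

noncomputable instance (n : ℕ) : Fintype (RootedLabeledTree n) := by
  unfold RootedLabeledTree; exact Fintype.ofFinite _

/-- The total height of a rooted labeled tree: the sum over all vertices of
the distance to the root. -/
noncomputable def totalHeight {n : ℕ} (T : RootedLabeledTree n) : ℕ :=
  ∑ v : Fin n, T.1.1.dist T.1.2 v

/-- The generating polynomial `J_n(y) = Σ_T y^{TotalHeight(T)}` of rooted labeled
trees on `n` vertices by total height. -/
noncomputable def J (n : ℕ) : Polynomial ℚ :=
  ∑ T : RootedLabeledTree n, Polynomial.X ^ totalHeight T

/-- OEIS A000435: `a(n) = (n−1)! · Σ_{k=0}^{n−2} n^k/k!`. -/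
noncomputable def a (n : ℕ) : ℚ :=
  ((n - 1).factorial : ℚ) * ∑ k ∈ Finset.range (n - 1), (n : ℚ) ^ k / (k.factorial : ℚ)

/-!
Deleting the roots of a forest on `V` with root set `R` leaves a forest on `V \ R` whose root set
`D` consists of the vertices of depth one, together with the map `D → R` to their parents. Depths
drop by one, so with `r = |R|`, `u = |V \ R|`, `n = |V| = r + u`, the number `N k` of pairs (forest,
vertex of depth at least `k`) satisfies `N (k + 1) (V, R) = ∑ D, r ^ |D| * N k (V \ R, D)`, and the
number of forests satisfies the same recursion without the shift in `k`. By the differentiated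
binomial theorem the solution is `N k = r * (u)_k * n ^ (u - k)`, where `(u)_k` is the falling
factorial; `k = 0` is Cayley's formula. Trees rooted at a given vertex are the forests with one
root, and their total height is the sum of `N k` over `k ≥ 1`.
-/

open Finset

theorem choose_mul_descFactorial_sub (n d k : ℕ) :
    n.choose d * (n - d).descFactorial k = n.descFactorial k * (n - k).choose d := by
  have falling_comm : n.descFactorial d * (n - d).descFactorial k
      = n.descFactorial k * (n - k).descFactorial d := by
    have h₁ := Nat.descFactorial_mul_descFactorial (n := n) (Nat.le_add_right d k)
    have h₂ := Nat.descFactorial_mul_descFactorial (n := n) (Nat.le_add_left k d)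
    rw [Nat.add_sub_cancel_left] at h₁
    rw [Nat.add_sub_cancel] at h₂
    rw [mul_comm, h₁, ← h₂, mul_comm]
  refine Nat.mul_left_cancel d.factorial_pos ?_
  rw [← mul_assoc, ← Nat.descFactorial_eq_factorial_mul_choose, falling_comm,
    Nat.descFactorial_eq_factorial_mul_choose (n - k) d]
  ring

theorem sum_range_choose_mul_mul_pow {S : Type*} [CommSemiring S] (x y : S) (n : ℕ) :
    ∑ d ∈ range (n + 1), (n.choose d : S) * (d * x ^ d * y ^ (n - d))
      = n * (x * (x + y) ^ (n - 1)) := by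
  cases n with
  | zero => simp
  | succ n =>
    have absorb (d : ℕ) : ((n + 1).choose (d + 1) : S) * (d + 1) = (n + 1) * n.choose d := by
      exact mod_cast congrArg (Nat.cast (R := S)) (Nat.add_one_mul_choose_eq n d).symm
    rw [sum_range_succ', Nat.add_sub_cancel, add_pow, mul_sum, mul_sum]
    simp only [Nat.cast_zero, zero_mul, mul_zero, add_zero, Nat.add_sub_add_right]
    refine sum_congr rfl fun d _ => ?_
    calc
      _ = ((n + 1).choose (d + 1) * (d + 1) : S) * (x ^ (d + 1) * y ^ (n - d)) := by
        push_cast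
        ring
      _ = _ := by
        rw [absorb]
        push_cast
        ring

theorem sum_range_choose_mul_descFactorial (r u k : ℕ) :
    ∑ d ∈ range (u + 1), u.choose d * (r ^ d * (d * (u - d).descFactorial k * u ^ (u - d - k)))
      = r * u.descFactorial (k + 1) * (r + u) ^ (u - (k + 1)) := by
  calc
    _ = ∑ d ∈ range (u + 1),
          u.descFactorial k * ((u - k).choose d * (d * r ^ d * u ^ (u - k - d))) := by
      refine sum_congr rfl fun d _ => ?_
      rw [Nat.sub_right_comm]
      linear_combination d * r ^ d * u ^ (u - k - d) * choose_mul_descFactorial_sub u d k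
    _ = u.descFactorial k *
          ∑ d ∈ range (u - k + 1), (u - k).choose d * (d * r ^ d * u ^ (u - k - d)) := by
      rw [← mul_sum]
      refine congrArg _ (sum_subset (range_subset_range.2 (by lia)) fun d _ hd => ?_).symm
      rw [Nat.choose_eq_zero_of_lt (by simpa using hd), zero_mul]
    _ = u.descFactorial k * ((u - k) * (r * (r + u) ^ (u - k - 1))) := by
      exact congrArg _ (mod_cast sum_range_choose_mul_mul_pow r u (u - k))
    _ = _ := by
      rw [Nat.descFactorial_succ, Nat.sub_sub]
      ring

theorem sum_finset_pow_card_mul_descFactorial (U : Type*) [Fintype U] (r k : ℕ) :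
    ∑ D : Finset U, r ^ #D *
        (#D * (Fintype.card U - #D).descFactorial k *
          Fintype.card U ^ (Fintype.card U - #D - k))
      = r * (Fintype.card U).descFactorial (k + 1) *
          (r + Fintype.card U) ^ (Fintype.card U - (k + 1)) := by
  rw [← sum_range_choose_mul_descFactorial, ← powerset_univ, ← card_univ]
  exact sum_powerset_apply_card fun d =>
    r ^ d * (d * (#univ - d).descFactorial k * #univ ^ (#univ - d - k))

theorem a_eq_sum_descFactorial_mul_pow (n : ℕ) :
    a n = (∑ k ∈ range (n - 1), (n - 1).descFactorial (k + 1) * n ^ (n - 1 - (k + 1)) : ℕ) := by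
  rw [a, mul_sum, ← sum_range_reflect]
  push_cast
  refine sum_congr rfl fun k hk => ?_
  have falling := Nat.factorial_mul_descFactorial (Nat.succ_le_of_lt (mem_range.1 hk))
  have := Nat.factorial_ne_zero (n - 1 - (k + 1))
  rw [show n - 1 - 1 - k = n - 1 - (k + 1) by lia, ← falling]
  push_cast
  field_simp

theorem card_subtype_notMem {V : Type*} [Fintype V] [DecidableEq V] (R : Finset V) :
    Fintype.card {v // v ∉ R} = #Rᶜ :=
  Fintype.card_of_subtype Rᶜ fun _ => mem_compl

theorem card_eq_card_add_card_subtype_notMem {V : Type*} [Fintype V] [DecidableEq V]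
    (R : Finset V) :
    Fintype.card V = #R + Fintype.card {v // v ∉ R} := by
  rw [card_subtype_notMem, card_add_card_compl]

/-- A rooted forest on `V` with root set `R`, given by the parent of each non-root. The depth
function is determined by the parents (`RootedForest.parent_injective`); its existence says that
following parents from any vertex leads to a root. -/
structure RootedForest (V : Type*) (R : Finset V) where
  parent : {v // v ∉ R} → V
  depth : V → ℕ
  depth_root : ∀ v ∈ R, depth v = 0
  depth_nonroot : ∀ u : {v // v ∉ R}, depth u = depth (parent u) + 1

namespace RootedForest

variable {V : Type*} {R : Finset V}

theorem depth_eq_zero_iff (f : RootedForest V R) {v : V} : f.depth v = 0 ↔ v ∈ R := by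
  refine ⟨fun hv => by_contra fun hR => ?_, f.depth_root v⟩
  have := f.depth_nonroot ⟨v, hR⟩
  lia

theorem parent_injective : Function.Injective (parent : RootedForest V R → _) := by
  intro f g h
  suffices depth_eq : ∀ k v, f.depth v = k → g.depth v = k by
    obtain ⟨p, d, _, _⟩ := f
    obtain ⟨q, e, _, _⟩ := g
    obtain rfl : d = e := funext fun v => (depth_eq _ v rfl).symm
    obtain rfl : p = q := h
    rfl
  intro k
  induction k with
  | zero => exact fun v hv => g.depth_eq_zero_iff.2 (f.depth_eq_zero_iff.1 hv)
  | succ k ih =>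
    intro v hv
    have hR : v ∉ R := fun hR => by simp [f.depth_root v hR] at hv
    have hf := f.depth_nonroot ⟨v, hR⟩
    rw [g.depth_nonroot ⟨v, hR⟩, ← h, ih (f.parent ⟨v, hR⟩) (by lia)]

noncomputable instance [Finite V] : Fintype (RootedForest V R) :=
  have := Finite.of_injective _ (parent_injective (R := R))
  Fintype.ofFinite _

theorem card_of_isEmpty_nonroots [Finite V] [IsEmpty {v // v ∉ R}] :
    Fintype.card (RootedForest V R) = 1 := by
  refine Fintype.card_eq_one_iff.2
    ⟨⟨isEmptyElim, fun _ => 0, fun _ _ => rfl, isEmptyElim⟩, fun _ => parent_injective ?_⟩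
  exact Subsingleton.elim _ _

/-- The underlying undirected graph of a rooted forest. -/
def graph (f : RootedForest V R) : SimpleGraph V :=
  SimpleGraph.fromEdgeSet (Set.range fun u : {v // v ∉ R} => s(↑u, f.parent u))

theorem adj_parent (f : RootedForest V R) (u : {v // v ∉ R}) : f.graph.Adj u (f.parent u) := by
  refine (SimpleGraph.fromEdgeSet_adj _).2 ⟨⟨u, rfl⟩, fun h => ?_⟩
  have := f.depth_nonroot u
  rw [← h] at this
  lia

theorem exists_parent_eq_of_adj (f : RootedForest V R) {v w : V} (h : f.graph.Adj v w) :
    (∃ hv : v ∉ R, f.parent ⟨v, hv⟩ = w) ∨ ∃ hw : w ∉ R, f.parent ⟨w, hw⟩ = v := by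
  obtain ⟨⟨⟨x, hx⟩, hxp⟩, -⟩ := (SimpleGraph.fromEdgeSet_adj _).1 h
  rcases Sym2.eq_iff.1 hxp with ⟨rfl, hp⟩ | ⟨rfl, hp⟩
  · exact .inl ⟨hx, hp⟩
  · exact .inr ⟨hx, hp⟩

theorem exists_root_walk_length_eq_depth (f : RootedForest V R) (v : V) :
    ∃ r ∈ R, ∃ w : f.graph.Walk v r, w.length = f.depth v := by
  induction hk : f.depth v generalizing v with
  | zero => exact ⟨v, f.depth_eq_zero_iff.1 hk, .nil, rfl⟩
  | succ k ih =>
    have hR : v ∉ R := fun hR => by simp [f.depth_root v hR] at hk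
    have hdepth := f.depth_nonroot ⟨v, hR⟩
    obtain ⟨r, hr, w, hw⟩ := ih (f.parent ⟨v, hR⟩) (by lia)
    exact ⟨r, hr, .cons (f.adj_parent ⟨v, hR⟩) w, by simp [hw]⟩

theorem isEmpty_of_no_roots [Nonempty V] : IsEmpty (RootedForest V ∅) where
  false f := by
    obtain ⟨r, hr, -⟩ := f.exists_root_walk_length_eq_depth (Classical.arbitrary V)
    exact notMem_empty r hr

theorem depth_le_depth_add_length (f : RootedForest V R) {v w : V} (p : f.graph.Walk v w) :
    f.depth v ≤ f.depth w + p.length := by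
  induction p with
  | nil => simp
  | cons h p ih =>
    rw [SimpleGraph.Walk.length_cons]
    rcases f.exists_parent_eq_of_adj h with ⟨hR, rfl⟩ | ⟨hR, rfl⟩ <;>
    · have := f.depth_nonroot ⟨_, hR⟩
      lia

section SingleRoot

variable {r : V}

theorem connected_graph (f : RootedForest V {r}) : f.graph.Connected := by
  have reachable_root (v : V) : f.graph.Reachable v r := by
    obtain ⟨s, hs, w, -⟩ := f.exists_root_walk_length_eq_depth v
    exact mem_singleton.1 hs ▸ w.reachable
  have : Nonempty V := ⟨r⟩
  exact ⟨fun v w => (reachable_root v).trans (reachable_root w).symm⟩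

theorem dist_root_eq_depth (f : RootedForest V {r}) (v : V) : f.graph.dist r v = f.depth v := by
  rw [SimpleGraph.dist_comm]
  refine le_antisymm ?_ ?_
  · obtain ⟨s, hs, w, hw⟩ := f.exists_root_walk_length_eq_depth v
    obtain rfl := mem_singleton.1 hs
    exact hw ▸ SimpleGraph.dist_le w
  · obtain ⟨w, hw⟩ := f.connected_graph.exists_walk_length_eq_dist v r
    have hle := f.depth_le_depth_add_length w
    rwa [f.depth_root r (mem_singleton_self r), zero_add, hw] at hle

theorem isTree_graph [Finite V] (f : RootedForest V {r}) : f.graph.IsTree := by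
  refine SimpleGraph.isTree_iff_connected_and_card.2 ⟨f.connected_graph, ?_⟩
  have := Fintype.ofFinite V
  classical
  have le_edges := f.connected_graph.card_vert_le_card_edgeSet_add_one
  have edges_le : Nat.card f.graph.edgeSet ≤ Nat.card {v // v ∉ ({r} : Finset V)} := by
    rw [graph, SimpleGraph.edgeSet_fromEdgeSet]
    exact (Nat.card_mono (Set.toFinite _) Set.sdiff_subset).trans (Finite.card_range_le _)
  have nonroots : Nat.card {v // v ∉ ({r} : Finset V)} + 1 = Nat.card V := by
    rw [Nat.card_eq_fintype_card, Nat.card_eq_fintype_card,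
      card_eq_card_add_card_subtype_notMem {r}, card_singleton, add_comm]
  lia

theorem graph_injective : Function.Injective (graph : RootedForest V {r} → _) := by
  intro f g h
  have depth_eq (v : V) : f.depth v = g.depth v := by
    rw [← dist_root_eq_depth, ← dist_root_eq_depth, h]
  refine parent_injective (funext fun u => ?_)
  rcases g.exists_parent_eq_of_adj (h ▸ f.adj_parent u) with ⟨_, hp⟩ | ⟨hR, hp⟩
  · exact hp.symm
  · have hf := f.depth_nonroot u
    have hg := g.depth_nonroot ⟨_, hR⟩
    rw [hp, ← depth_eq, ← depth_eq] at hg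
    lia

theorem exists_graph_le {G : SimpleGraph V} (hG : G.Connected) (r : V) :
    ∃ f : RootedForest V {r}, f.graph ≤ G := by
  have exists_closer (u : {v // v ∉ ({r} : Finset V)}) :
      ∃ w, G.Adj u w ∧ G.dist u r = G.dist w r + 1 := by
    obtain ⟨u, hu⟩ := u
    obtain ⟨p, hp⟩ := hG.exists_walk_length_eq_dist u r
    cases p with
    | nil => exact absurd (mem_singleton_self _) hu
    | @cons _ w _ huw p =>
      refine ⟨w, huw, ?_⟩
      rw [SimpleGraph.Walk.length_cons] at hp
      have hle := SimpleGraph.dist_le p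
      have htri := hG.dist_triangle (u := u) (v := w) (w := r)
      rw [SimpleGraph.dist_eq_one_iff_adj.2 huw] at htri
      lia
  choose p hadj hdist using exists_closer
  refine ⟨⟨p, fun v => G.dist v r, by simp, hdist⟩, fun v w hvw => ?_⟩
  rcases exists_parent_eq_of_adj _ hvw with ⟨_, rfl⟩ | ⟨_, rfl⟩
  · exact hadj ⟨v, _⟩
  · exact (hadj ⟨w, _⟩).symm

theorem exists_graph_eq {T : SimpleGraph V} (hT : T.IsTree) (r : V) :
    ∃ f : RootedForest V {r}, f.graph = T := by
  obtain ⟨f, hf⟩ := exists_graph_le hT.connected r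
  have minimal := SimpleGraph.isTree_iff_minimal_connected.1 hT
  exact ⟨f, minimal.eq_of_le f.connected_graph hf⟩

end SingleRoot

section RootRemoval

variable [DecidableEq V]

/-- The forest obtained from a forest `g` on the non-roots by attaching each root `d` of `g` to
`q d ∈ R`. -/
def graft {D : Finset {v // v ∉ R}} (q : D → R) (g : RootedForest {v // v ∉ R} D) :
    RootedForest V R where
  parent u := if h : u ∈ D then q ⟨u, h⟩ else g.parent ⟨u, h⟩
  depth v := if h : v ∈ R then 0 else g.depth ⟨v, h⟩ + 1
  depth_root v hv := dif_pos hv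
  depth_nonroot u := by
    by_cases hD : u ∈ D
    · simp [hD, u.2, g.depth_root]
    · simp [hD, u.2, (g.parent ⟨u, hD⟩).2, g.depth_nonroot ⟨u, hD⟩]

section Graft

variable {D : Finset {v // v ∉ R}} (q : D → R) (g : RootedForest {v // v ∉ R} D)

theorem graft_parent_root (d : D) : (graft q g).parent d = q d := dif_pos d.2

theorem graft_parent_nonroot (u : {u // u ∉ D}) : (graft q g).parent u = g.parent u := dif_neg u.2

theorem graft_parent_mem_iff (u : {v // v ∉ R}) : (graft q g).parent u ∈ R ↔ u ∈ D := by
  by_cases h : u ∈ D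
  · simp [graft_parent_root q g ⟨u, h⟩, h]
  · simp [graft_parent_nonroot q g ⟨u, h⟩, h, (g.parent _).2]

theorem card_succ_le_graft_depth [Fintype V] (k : ℕ) :
    #{v | k + 1 ≤ (graft q g).depth v} = #{u | k ≤ g.depth u} := by
  refine (card_nbij Subtype.val (fun u hu => ?_) Subtype.val_injective.injOn
    fun v hv => ?_).symm
  · simpa [graft, u.2] using hu
  · have hR : v ∉ R := fun hR => by simp [graft, hR] at hv
    exact ⟨⟨v, hR⟩, by simpa [graft, hR] using hv, rfl⟩

end Graft

theorem graft_bijective [Finite V] : Function.Bijective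
    fun x : Σ D : Finset {v // v ∉ R}, (D → R) × RootedForest {v // v ∉ R} D =>
      graft x.2.1 x.2.2 := by
  constructor
  · rintro ⟨D, q, g⟩ ⟨D', q', g'⟩ h
    simp only at h
    obtain rfl : D = D' := by
      ext u
      rw [← graft_parent_mem_iff q g, h, graft_parent_mem_iff]
    obtain rfl : q = q' := funext fun d => Subtype.ext <| by
      rw [← graft_parent_root q g, h, graft_parent_root]
    obtain rfl : g = g' := parent_injective <| funext fun u => Subtype.ext <| by
      rw [← graft_parent_nonroot q g, h, graft_parent_nonroot]
    rfl
  · intro f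
    have := Fintype.ofFinite V
    let D : Finset {v // v ∉ R} := {u | f.parent u ∈ R}
    have mem_D (u) : u ∈ D ↔ f.parent u ∈ R := by simp [D]
    let g : RootedForest {v // v ∉ R} D :=
      { parent := fun u => ⟨f.parent u, (mem_D u).not.1 u.2⟩
        depth := fun u => f.depth u - 1
        depth_root := fun u hu => by
          rw [f.depth_nonroot, f.depth_root _ ((mem_D u).1 hu)]
        depth_nonroot := fun u => by
          have h₁ := f.depth_nonroot u
          have h₂ := f.depth_nonroot ⟨f.parent u, (mem_D u).not.1 u.2⟩
          simp only at h₂ ⊢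
          lia }
    refine ⟨⟨D, fun d => ⟨f.parent d, (mem_D d).1 d.2⟩, g⟩, parent_injective (funext fun u => ?_)⟩
    by_cases h : u ∈ D
    · exact graft_parent_root _ g ⟨u, h⟩
    · exact graft_parent_nonroot _ g ⟨u, h⟩

end RootRemoval

section Counting

variable [Fintype V] [DecidableEq V]

theorem sum_eq_sum_graft {M : Type*} [AddCommMonoid M] (φ : RootedForest V R → M) :
    ∑ f, φ f = ∑ D : Finset {v // v ∉ R}, ∑ q : D → R, ∑ g, φ (graft q g) := by
  rw [← graft_bijective.sum_comp, Fintype.sum_sigma]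
  simp only [Fintype.sum_prod_type]

theorem card_eq_sum_card (R : Finset V) :
    Fintype.card (RootedForest V R)
      = ∑ D : Finset {v // v ∉ R}, #R ^ #D * Fintype.card (RootedForest {v // v ∉ R} D) := by
  rw [← Finset.card_univ, card_eq_sum_ones, sum_eq_sum_graft]
  simp

theorem sum_card_succ_le_depth (R : Finset V) (k : ℕ) :
    ∑ f : RootedForest V R, #{v | k + 1 ≤ f.depth v}
      = ∑ D : Finset {v // v ∉ R},
          #R ^ #D * ∑ g : RootedForest {v // v ∉ R} D, #{u | k ≤ g.depth u} := by
  rw [sum_eq_sum_graft]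
  simp only [card_succ_le_graft_depth, sum_const, card_univ, Fintype.card_fun, Fintype.card_coe,
    smul_eq_mul]

/-- Cayley's formula, multiplied by `|V|` so that the exponent `|Rᶜ| - 1` does not truncate when
`R` is all of `V`. -/
theorem card_mul_card_rootedForest (R : Finset V) :
    Fintype.card V * Fintype.card (RootedForest V R) = #R * Fintype.card V ^ #Rᶜ := by
  induction hn : Fintype.card V using Nat.strong_induction_on generalizing V with
  | _ n ih =>
  subst hn
  rw [← card_subtype_notMem]
  rcases isEmpty_or_nonempty {v // v ∉ R} with hU | hU
  · simp [card_of_isEmpty_nonroots, card_eq_card_add_card_subtype_notMem R]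
  rcases R.eq_empty_or_nonempty with rfl | hR
  · have : Nonempty V := hU.map Subtype.val
    have := isEmpty_of_no_roots (V := V)
    simp
  have card_V := card_eq_card_add_card_subtype_notMem R
  set u := Fintype.card {v // v ∉ R}
  have u_pos : 0 < u := Fintype.card_pos
  have ih_nonroots (D : Finset {v // v ∉ R}) :
      u * Fintype.card (RootedForest {v // v ∉ R} D) = #D * u ^ (u - #D) := by
    rw [← card_compl]
    exact ih _ (by have := hR.card_pos; lia) D rfl
  have mul_card : u * Fintype.card (RootedForest V R)
      = u * (#R * Fintype.card V ^ (u - 1)) := by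
    calc
      _ = ∑ D : Finset {v // v ∉ R}, #R ^ #D * (#D * u ^ (u - #D)) := by
        rw [card_eq_sum_card, mul_sum]
        simp only [← ih_nonroots, mul_left_comm]
      _ = #R * u * (#R + u) ^ (u - 1) := by
        simpa only [Nat.descFactorial_zero, Nat.descFactorial_one, zero_add, mul_one, Nat.sub_zero]
          using sum_finset_pow_card_mul_descFactorial {v // v ∉ R} #R 0
      _ = _ := by rw [card_V, mul_left_comm, mul_assoc]
  rw [Nat.eq_of_mul_eq_mul_left u_pos mul_card, mul_left_comm, mul_pow_sub_one u_pos.ne']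

theorem sum_card_le_depth (R : Finset V) (k : ℕ) :
    ∑ f : RootedForest V R, #{v | k ≤ f.depth v}
      = #R * (#Rᶜ).descFactorial k * Fintype.card V ^ (#Rᶜ - k) := by
  induction k generalizing V with
  | zero => simpa [mul_comm] using card_mul_card_rootedForest R
  | succ k ih =>
    rw [sum_card_succ_le_depth, card_eq_card_add_card_subtype_notMem R, ← card_subtype_notMem]
    simp only [ih, card_compl]
    exact sum_finset_pow_card_mul_descFactorial {v // v ∉ R} #R k

theorem depth_le_card_compl (f : RootedForest V R) (v : V) : f.depth v ≤ #Rᶜ := by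
  by_contra! hlt
  have none_deeper := sum_card_le_depth R (#Rᶜ + 1)
  rw [Nat.descFactorial_of_lt (Nat.lt_succ_self _), mul_zero, zero_mul] at none_deeper
  have hf := sum_eq_zero_iff.1 none_deeper f (mem_univ f)
  exact filter_eq_empty_iff.1 (card_eq_zero.1 hf) (mem_univ v) hlt

theorem sum_depth_eq_sum_card (f : RootedForest V R) :
    ∑ v, f.depth v = ∑ k ∈ range #Rᶜ, #{v | k + 1 ≤ f.depth v} := by
  have depth_eq_card (v : V) : f.depth v = #{k ∈ range #Rᶜ | k + 1 ≤ f.depth v} := by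
    have below : {k ∈ range #Rᶜ | k + 1 ≤ f.depth v} = range (f.depth v) := by
      ext k
      have := f.depth_le_card_compl v
      simp only [mem_filter, mem_range]
      lia
    rw [below, card_range]
  rw [sum_congr rfl fun v _ => depth_eq_card v]
  exact sum_card_bipartiteAbove_eq_sum_card_bipartiteBelow fun v k => k + 1 ≤ f.depth v

theorem sum_sum_depth (R : Finset V) :
    ∑ f : RootedForest V R, ∑ v, f.depth v
      = #R * ∑ k ∈ range #Rᶜ,
          (#Rᶜ).descFactorial (k + 1) * Fintype.card V ^ (#Rᶜ - (k + 1)) := by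
  simp only [sum_depth_eq_sum_card]
  rw [sum_comm, mul_sum]
  simp only [sum_card_le_depth, mul_assoc]

end Counting

/-- A forest on `Fin n` with the single root `r`, as a tree rooted at `r`. -/
def toRootedLabeledTree {n : ℕ} {r : Fin n} (f : RootedForest (Fin n) {r}) :
    RootedLabeledTree n :=
  ⟨(f.graph, r), f.isTree_graph⟩

theorem totalHeight_toRootedLabeledTree {n : ℕ} {r : Fin n} (f : RootedForest (Fin n) {r}) :
    totalHeight f.toRootedLabeledTree = ∑ v, f.depth v :=
  sum_congr rfl fun v _ => f.dist_root_eq_depth v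

theorem toRootedLabeledTree_bijective (n : ℕ) : Function.Bijective
    fun x : Σ r : Fin n, RootedForest (Fin n) {r} => x.2.toRootedLabeledTree := by
  constructor
  · rintro ⟨r, f⟩ ⟨s, g⟩ h
    obtain ⟨hgraph, rfl⟩ : f.graph = g.graph ∧ r = s := Prod.mk.inj (Subtype.mk.inj h)
    obtain rfl := graph_injective hgraph
    rfl
  · rintro ⟨⟨T, r⟩, hT⟩
    obtain ⟨f, rfl⟩ := exists_graph_eq hT r
    exact ⟨⟨r, f⟩, rfl⟩

end RootedForest

theorem sum_depth_singleton_root_eq_a {n : ℕ} (r : Fin n) :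
    ((∑ f : RootedForest (Fin n) {r}, ∑ v, f.depth v : ℕ) : ℚ) = a n := by
  rw [RootedForest.sum_sum_depth, a_eq_sum_descFactorial_mul_pow, card_compl, card_singleton,
    Fintype.card_fin, one_mul]

theorem sum_totalHeight_eq (n : ℕ) :
    ∑ T : RootedLabeledTree n, (totalHeight T : ℚ) = n * a n := by
  rw [← (RootedForest.toRootedLabeledTree_bijective n).sum_comp, Fintype.sum_sigma]
  simp only [RootedForest.totalHeight_toRootedLabeledTree]
  simp only [← Nat.cast_sum, sum_depth_singleton_root_eq_a]
  simp

/-- For `n ≥ 2`: `n! Σ_{k=0}^{n−2} n^k/k! = n · (n−1)! Σ_{k=0}^{n−2} n^k/k!`, and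
`a(n) := (n−1)! Σ_{k=0}^{n−2} n^k/k!` satisfies `n·a(n) = Σ_T TotalHeight(T)`, the sum
of total heights over all rooted labeled trees on `n` vertices; moreover
`a(2)=1`, `a(3)=8`, `a(4)=78`, `a(5)=944`. -/
theorem A000435_spec :
    (∀ n : ℕ, 2 ≤ n →
      (n.factorial : ℚ) * ∑ k ∈ Finset.range (n - 1), (n : ℚ) ^ k / (k.factorial : ℚ)
        = (n : ℚ) * a n ∧
      (n : ℚ) * a n = ∑ T : RootedLabeledTree n, (totalHeight T : ℚ)) ∧
    a 2 = 1 ∧ a 3 = 8 ∧ a 4 = 78 ∧ a 5 = 944 := by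
  refine ⟨fun n hn => ⟨?_, (sum_totalHeight_eq n).symm⟩, ?_⟩
  · rw [a, ← mul_assoc, ← Nat.cast_mul, Nat.mul_factorial_pred (by lia)]
  · norm_num [a, sum_range_succ, Nat.factorial]
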